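/- Let d_R, d_f, d_P, d_B be positive integers with d_R·d_f = d_P·d_B, and let H_b = H_R = ℂ^{d_R}, H_f = ℂ^{d_f}, H_P = ℂ^{d_P}, H_B = ℂ^{d_B}. Fix unit vectors ψ_f ∈ H_f and e_P ∈ H_P, a unit vector ψ ∈ H_b ⊗ H_R, and a unitary W_b on H_b. For a unitary U : H_b ⊗ H_f → H_P ⊗ H_B define Ṽ_U : H_b → H_B by Ṽ_U(v) = √(d_P) · (⟨e_P| ⊗ I_B) U (v ⊗ ψ_f). Then, with μ the Haar probability measure on the unitary group of dimension d_P·d_B: ∫ ‖ Tr_R[ (Ṽ_U ⊗ I_R)(W_b ⊗ I_R) ψψ† (W_b† ⊗ I_R)(Ṽ_U† ⊗ I_R) ] − Tr_R[ (Ṽ_U ⊗ I_R) ψψ† (Ṽ_U† ⊗ I_R) ] ‖₂² dμ(U) ≤ 4 · Tr[ (Tr_R(ψψ†))² ], i.e. the Haar-averaged squared Frobenius norm is at most 4·e^{−S₂(b)_ψ}, where S₂(b)_ψ = −log Tr[(Tr_R(ψψ†))²] is the second Rényi entropy of ψ on the code factor H_b. -/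

import Mathlib

open scoped BigOperators Kronecker
open MeasureTheory

/-- The rank-one operator `|v⟩⟨v|` of a vector. -/
noncomputable def outer {n : Type*} (v : n → ℂ) : Matrix n n ℂ :=
  fun i j => v i * (starRingEnd ℂ) (v j)

/-- Partial trace over the second (right) tensor factor (`Tr_R`):
`(Tr_R ρ)_{i,j} = ∑ₖ ρ_{(i,k),(j,k)}`. -/
noncomputable def ptraceRight {a b : Type*} [Fintype b]
    (ρ : Matrix (a × b) (a × b) ℂ) : Matrix a a ℂ :=
  fun i j => ∑ k, ρ (i, k) (j, k)

/-- Squared Frobenius (Schatten-2) norm `‖M‖₂² = Tr(M†M) = ∑ |M_{ij}|²`. -/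
noncomputable def frobSq {n : Type*} [Fintype n] (M : Matrix n n ℂ) : ℝ :=
  ∑ i, ∑ j, ‖M i j‖ ^ 2

/-- The post-measurement encoding map `Ṽ_U : H_b → H_B`,
`Ṽ_U(v) = √(d_P) (⟨e_P| ⊗ I_B) U (v ⊗ ψ_f)`, written as a `d_B × d_R` matrix;
`e : Fin dR × Fin df ≃ Fin dP × Fin dB` identifies `H_b ⊗ H_f` with `H_P ⊗ H_B`. -/
noncomputable def Vtilde (dR df dP dB : ℕ)
    (e : Fin dR × Fin df ≃ Fin dP × Fin dB)
    (ψf : Fin df → ℂ) (eP : Fin dP → ℂ)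
    (U : Matrix (Fin dP × Fin dB) (Fin dP × Fin dB) ℂ) :
    Matrix (Fin dB) (Fin dR) ℂ :=
  fun k r => (Real.sqrt dP : ℂ) * ∑ p, (starRingEnd ℂ) (eP p) *
    ∑ y : Fin dP × Fin dB,
      U (p, k) y * (if (e.symm y).1 = r then ψf (e.symm y).2 else 0)

/-!
Write `ρ = Tr_R ψψ†` and `X = W ρ W† - ρ`. Tracing out `R` turns the integrand into
`‖Ṽ_U X Ṽ_U†‖₂²`, that is, up to the factor `d_P²`, the squared norm of a diagonal block of the
random matrix `U Y U†`, where `Y` is the image of the traceless matrix `X` under the isometry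
`v ↦ v ⊗ ψ_f`. By invariance of the measure the second moments of the entries of `U Y U†` take
only two values, one on the diagonal and one off it, and averaging over relative phases shows that
their difference is the correlation of two distinct diagonal entries. The diagonal entries sum to
zero, so this correlation is nonpositive and diagonal moments are the smaller ones. Hence a
diagonal block carries at most the average `d_P⁻²` of the total `‖Y‖₂² = ‖X‖₂²`, which is at most
`‖W ρ W†‖₂² + ‖ρ‖₂² = 2 Tr ρ²` because both states are positive.
-/

open Matrix
open scoped ComplexOrder MatrixOrder

section FrobeniusNorm

variable {m n : Type*} [Fintype m] [Fintype n]

theorem frobSq_eq_re_trace (M : Matrix n n ℂ) : frobSq M = (trace (M * Mᴴ)).re := by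
  simp only [frobSq, trace, diag_apply, mul_apply, conjTranspose_apply, Complex.re_sum,
    Complex.star_def, Complex.mul_conj, Complex.ofReal_re, Complex.normSq_eq_norm_sq]

theorem frobSq_smul (c : ℂ) (M : Matrix n n ℂ) : frobSq (c • M) = ‖c‖ ^ 2 * frobSq M := by
  simp only [frobSq, Matrix.smul_apply, norm_smul, mul_pow, Finset.mul_sum]

theorem re_trace_mul_nonneg_of_posSemidef {A B : Matrix n n ℂ} (hA : A.PosSemidef)
    (hB : B.PosSemidef) : 0 ≤ (trace (A * B)).re := by
  classical
  obtain ⟨C, rfl⟩ := CStarAlgebra.nonneg_iff_eq_star_mul_self.1 hB.nonneg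
  rw [← Matrix.mul_assoc, trace_mul_comm, ← Matrix.mul_assoc]
  exact (Complex.nonneg_iff.1 (hA.mul_mul_conjTranspose_same C).trace_nonneg).1

theorem frobSq_sub_le_of_posSemidef {A B : Matrix n n ℂ} (hA : A.PosSemidef)
    (hB : B.PosSemidef) : frobSq (A - B) ≤ frobSq A + frobSq B := by
  have hAB := re_trace_mul_nonneg_of_posSemidef hA hB
  have hBA := re_trace_mul_nonneg_of_posSemidef hB hA
  simp only [frobSq_eq_re_trace, conjTranspose_sub, hA.isHermitian.eq, hB.isHermitian.eq,
    Matrix.mul_sub, Matrix.sub_mul, trace_sub, Complex.sub_re]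
  linarith

theorem trace_isometry_conj [DecidableEq n] {S : Matrix m n ℂ} (hS : Sᴴ * S = 1)
    (M : Matrix n n ℂ) : trace (S * M * Sᴴ) = trace M := by
  rw [trace_mul_comm, ← Matrix.mul_assoc, hS, Matrix.one_mul]

theorem frobSq_isometry_conj [DecidableEq n] {S : Matrix m n ℂ} (hS : Sᴴ * S = 1)
    (M : Matrix n n ℂ) : frobSq (S * M * Sᴴ) = frobSq M := by
  have h : S * M * Sᴴ * (S * M * Sᴴ)ᴴ = S * (M * Mᴴ) * Sᴴ := by
    calc S * M * Sᴴ * (S * M * Sᴴ)ᴴ = S * M * (Sᴴ * S) * (Mᴴ * Sᴴ) := by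
          simp only [conjTranspose_mul, conjTranspose_conjTranspose, Matrix.mul_assoc]
      _ = S * (M * Mᴴ) * Sᴴ := by rw [hS, Matrix.mul_one]; simp only [Matrix.mul_assoc]
  rw [frobSq_eq_re_trace, h, trace_isometry_conj hS, ← frobSq_eq_re_trace]

end FrobeniusNorm

section UnitaryConjugation

variable {n : Type*} [Fintype n] [DecidableEq n]

instance compactSpace_unitaryGroup : CompactSpace (unitaryGroup n ℂ) := by
  have hball : IsCompact (Set.univ.pi fun _ : n => Set.univ.pi fun _ : n =>
      Metric.closedBall (0 : ℂ) 1) :=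
    isCompact_univ_pi fun _ => isCompact_univ_pi fun _ => isCompact_closedBall _ _
  have hclosed : IsClosed (unitaryGroup n ℂ : Set (Matrix n n ℂ)) := by
    have h : (unitaryGroup n ℂ : Set (Matrix n n ℂ)) = {A | A * star A = 1} :=
      Set.ext fun _ => mem_unitaryGroup_iff
    rw [h]
    exact isClosed_eq (by fun_prop) continuous_const
  refine isCompact_iff_compactSpace.1 (hball.of_isClosed_subset hclosed fun U hU i _ j _ => ?_)
  simpa only [mem_closedBall_zero_iff] using entry_norm_bound_of_unitary hU i j

theorem exists_unitary_row {v : n → ℂ} (hv : ∑ i, ‖v i‖ ^ 2 = 1) (i : n) :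
    ∃ G : unitaryGroup n ℂ, (G : Matrix n n ℂ) i = v := by
  have hv' : ‖WithLp.toLp 2 v‖ = 1 := by
    rw [EuclideanSpace.norm_eq, hv, Real.sqrt_one]
  obtain ⟨b, hb⟩ := Orthonormal.exists_orthonormalBasis_extension_of_card_eq
    (𝕜 := ℂ) (E := EuclideanSpace ℂ n) (ι := n) (by simp)
    (v := fun _ => WithLp.toLp 2 v) (s := {i})
    ⟨fun _ => hv', fun k l hkl => (hkl (Subsingleton.elim k l)).elim⟩
  refine ⟨⟨_, transpose_mem_unitaryGroup_iff.2
    ((EuclideanSpace.basisFun n ℂ).toMatrix_orthonormalBasis_mem_unitary b)⟩, ?_⟩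
  ext j
  simp [Module.Basis.toMatrix_apply, hb i rfl]

/-- The conjugate `U Y U†`, regarded as a random matrix when `U` is drawn from a measure on the
unitary group. -/
def unitaryConj (U : unitaryGroup n ℂ) (Y : Matrix n n ℂ) : Matrix n n ℂ :=
  (U : Matrix n n ℂ) * Y * (U : Matrix n n ℂ)ᴴ

theorem unitaryConj_mul (G U : unitaryGroup n ℂ) (Y : Matrix n n ℂ) :
    unitaryConj (G * U) Y = unitaryConj G (unitaryConj U Y) := by
  simp only [unitaryConj, UnitaryGroup.mul_val, conjTranspose_mul, Matrix.mul_assoc]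

theorem trace_unitaryConj (U : unitaryGroup n ℂ) (Y : Matrix n n ℂ) :
    trace (unitaryConj U Y) = trace Y :=
  trace_isometry_conj (UnitaryGroup.star_mul_self U) Y

theorem frobSq_unitaryConj (U : unitaryGroup n ℂ) (Y : Matrix n n ℂ) :
    frobSq (unitaryConj U Y) = frobSq Y :=
  frobSq_isometry_conj (UnitaryGroup.star_mul_self U) Y

theorem unitaryConj_apply_self (U : unitaryGroup n ℂ) (Y : Matrix n n ℂ) (i : n) :
    unitaryConj U Y i i = (U : Matrix n n ℂ) i ⬝ᵥ Y *ᵥ star ((U : Matrix n n ℂ) i) := by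
  rw [unitaryConj, Matrix.mul_assoc]
  rfl

@[fun_prop]
theorem continuous_unitaryConj_apply (Y : Matrix n n ℂ) (i j : n) :
    Continuous fun U : unitaryGroup n ℂ => unitaryConj U Y i j := by
  have h : Continuous fun U : unitaryGroup n ℂ => unitaryConj U Y := by
    unfold unitaryConj
    fun_prop
  exact h.matrix_elem i j

variable [MeasurableSpace (unitaryGroup n ℂ)] [BorelSpace (unitaryGroup n ℂ)]
  (μ : Measure (unitaryGroup n ℂ))

theorem integrable_of_continuous_unitaryGroup [IsFiniteMeasureOnCompacts μ]
    {f : unitaryGroup n ℂ → ℝ} (hf : Continuous f) : Integrable f μ :=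
  hf.integrable_of_hasCompactSupport (HasCompactSupport.of_compactSpace f)

theorem integral_unitaryConj_unitaryConj [μ.IsMulLeftInvariant] (G : unitaryGroup n ℂ)
    (Y : Matrix n n ℂ) (f : Matrix n n ℂ → ℝ) :
    ∫ U, f (unitaryConj G (unitaryConj U Y)) ∂μ = ∫ U, f (unitaryConj U Y) ∂μ := by
  simp only [← unitaryConj_mul]
  exact integral_mul_left_eq_self (fun U => f (unitaryConj U Y)) G

theorem integral_normSq_dotProduct_unitaryConj [μ.IsMulLeftInvariant] (Y : Matrix n n ℂ)
    {v : n → ℂ} (hv : ∑ k, ‖v k‖ ^ 2 = 1) (i : n) :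
    ∫ U, ‖v ⬝ᵥ unitaryConj U Y *ᵥ star v‖ ^ 2 ∂μ = ∫ U, ‖unitaryConj U Y i i‖ ^ 2 ∂μ := by
  obtain ⟨G, rfl⟩ := exists_unitary_row hv i
  simp only [← unitaryConj_apply_self]
  exact integral_unitaryConj_unitaryConj μ G Y fun M => ‖M i i‖ ^ 2

end UnitaryConjugation

section PhaseAveraging

theorem sum_normSq_add_phases (α β γ : ℂ) :
    ∑ k ∈ Finset.range 4, ‖α + star (Complex.I ^ k) * β + Complex.I ^ k * γ‖ ^ 2 =
      4 * (‖α‖ ^ 2 + ‖β‖ ^ 2 + ‖γ‖ ^ 2) := by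
  simp only [Complex.sq_norm, Finset.sum_range_succ, Finset.sum_range_zero]
  simp only [pow_succ, pow_zero, one_mul, Complex.I_mul_I, neg_mul, Complex.star_def, map_one,
    map_neg, Complex.conj_I, neg_neg, Complex.normSq_apply, Complex.add_re, Complex.add_im,
    Complex.neg_re, Complex.neg_im, Complex.mul_re, Complex.mul_im, Complex.I_re, Complex.I_im]
  ring

variable {n : Type*} [Fintype n] [DecidableEq n]

/-- The vector `(e_i + z e_j) / √2`, a unit vector for `i ≠ j` and `‖z‖ = 1`, through which a
diagonal entry of `U Y U†` is compared with the off-diagonal ones. -/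
noncomputable def phaseVector (i j : n) (z : ℂ) : n → ℂ :=
  ((√2 : ℝ) : ℂ)⁻¹ • (Pi.single i 1 + Pi.single j z)

theorem sum_normSq_phaseVector {i j : n} (hij : i ≠ j) {z : ℂ} (hz : ‖z‖ = 1) :
    ∑ k, ‖phaseVector i j z k‖ ^ 2 = 1 := by
  rw [Finset.sum_eq_add i j hij]
  · simp only [phaseVector, Pi.smul_apply, Pi.add_apply, Pi.single_eq_same,
      Pi.single_eq_of_ne hij, Pi.single_eq_of_ne hij.symm, add_zero, zero_add, smul_eq_mul,
      norm_mul, norm_inv, hz, Complex.norm_real, Real.norm_eq_abs, mul_one, inv_pow,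
      sq_abs, Real.sq_sqrt zero_le_two]
    norm_num
  · intro k _ hk
    simp [phaseVector, hk.1, hk.2]
  all_goals simp

theorem phaseVector_dotProduct_mulVec (M : Matrix n n ℂ) (i j : n) {z : ℂ} (hz : ‖z‖ = 1) :
    phaseVector i j z ⬝ᵥ M *ᵥ star (phaseVector i j z) =
      (M i i + M j j + star z * M i j + z * M j i) / 2 := by
  have hzz : z * star z = 1 := by
    rw [Complex.star_def, Complex.mul_conj, Complex.normSq_eq_norm_sq, hz]
    norm_num
  have hstar : star (Pi.single i 1 + Pi.single j z : n → ℂ) =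
      Pi.single i 1 + Pi.single j (star z) := by
    rw [star_add, ← Pi.single_star, ← Pi.single_star, star_one]
  have hscale : ((√2 : ℝ) : ℂ)⁻¹ * star ((√2 : ℝ) : ℂ)⁻¹ = 1 / 2 := by
    rw [star_inv₀, Complex.star_def, Complex.conj_ofReal, ← mul_inv, ← Complex.ofReal_mul,
      Real.mul_self_sqrt zero_le_two]
    norm_num
  rw [phaseVector, star_smul, hstar, smul_dotProduct, mulVec_smul, dotProduct_smul, smul_smul,
    hscale, smul_eq_mul]
  simp only [mulVec_add, add_dotProduct, dotProduct_add, single_dotProduct, mulVec_single,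
    Pi.smul_apply, MulOpposite.smul_eq_mul_unop, MulOpposite.unop_op, col_apply]
  linear_combination M j j / 2 * hzz

end PhaseAveraging

section EntryMoments

variable {n : Type*} [Fintype n] [DecidableEq n] [MeasurableSpace (unitaryGroup n ℂ)]

/-- The second moment of the `(i, j)` entry of the random matrix `U Y U†`. -/
noncomputable def entryMoment (μ : Measure (unitaryGroup n ℂ)) (Y : Matrix n n ℂ) (i j : n) : ℝ :=
  ∫ U, ‖unitaryConj U Y i j‖ ^ 2 ∂μ

/-- The correlation of two diagonal entries of the random matrix `U Y U†`, taken with respect to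
the real inner product of `ℂ`. -/
noncomputable def diagCorrelation (μ : Measure (unitaryGroup n ℂ)) (Y : Matrix n n ℂ)
    (i j : n) : ℝ :=
  ∫ U, inner ℝ (unitaryConj U Y i i) (unitaryConj U Y j j) ∂μ

theorem entryMoment_nonneg (μ : Measure (unitaryGroup n ℂ)) (Y : Matrix n n ℂ) (i j : n) :
    0 ≤ entryMoment μ Y i j :=
  integral_nonneg fun _ => sq_nonneg _

theorem diagCorrelation_self (μ : Measure (unitaryGroup n ℂ)) (Y : Matrix n n ℂ) (i : n) :
    diagCorrelation μ Y i i = entryMoment μ Y i i := by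
  simp only [diagCorrelation, entryMoment, real_inner_self_eq_norm_sq]

variable [BorelSpace (unitaryGroup n ℂ)] (μ : Measure (unitaryGroup n ℂ))

theorem entryMoment_perm [μ.IsMulLeftInvariant] (Y : Matrix n n ℂ) (σ : Equiv.Perm n) (i j : n) :
    entryMoment μ Y (σ i) (σ j) = entryMoment μ Y i j := by
  have hσ : σ.permMatrix ℂ ∈ unitaryGroup n ℂ := by
    rw [mem_unitaryGroup_iff, star_eq_conjTranspose, conjTranspose_permMatrix,
      ← permMatrix_mul, inv_mul_cancel, permMatrix_one]
  have hconj (M : Matrix n n ℂ) : unitaryConj ⟨_, hσ⟩ M = M.submatrix σ σ := by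
    rw [unitaryConj, conjTranspose_permMatrix, PEquiv.toMatrix_toPEquiv_mul,
      PEquiv.mul_toMatrix_toPEquiv]
    rfl
  have h := integral_unitaryConj_unitaryConj μ ⟨_, hσ⟩ Y fun M => ‖M i j‖ ^ 2
  simpa only [hconj, submatrix_apply, entryMoment] using h

theorem entryMoment_diag_eq [μ.IsMulLeftInvariant] (Y : Matrix n n ℂ) (i j : n) :
    entryMoment μ Y i i = entryMoment μ Y j j := by
  rw [← entryMoment_perm μ Y (Equiv.swap i j) i i, Equiv.swap_apply_left]

theorem entryMoment_offDiag_eq [μ.IsMulLeftInvariant] (Y : Matrix n n ℂ) {i j k l : n}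
    (hij : i ≠ j) (hkl : k ≠ l) : entryMoment μ Y i j = entryMoment μ Y k l := by
  obtain ⟨σ, rfl, rfl⟩ := MulAction.is_two_pretransitive_iff.1
    (Equiv.Perm.isMultiplyPretransitive n 2) hij hkl
  exact (entryMoment_perm μ Y σ i j).symm

variable [IsFiniteMeasureOnCompacts μ]

theorem integral_normSq_diag_add_diag (Y : Matrix n n ℂ) (i j : n) :
    ∫ U, ‖unitaryConj U Y i i + unitaryConj U Y j j‖ ^ 2 ∂μ =
      entryMoment μ Y i i + 2 * diagCorrelation μ Y i j + entryMoment μ Y j j := by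
  simp only [norm_add_sq_real]
  rw [integral_add, integral_add, integral_const_mul]
  · rfl
  all_goals exact integrable_of_continuous_unitaryGroup μ (by fun_prop)

theorem four_mul_entryMoment_diag [μ.IsMulLeftInvariant] (Y : Matrix n n ℂ) {i j : n}
    (hij : i ≠ j) :
    4 * entryMoment μ Y i i =
      ∫ U, ‖unitaryConj U Y i i + unitaryConj U Y j j‖ ^ 2 ∂μ +
        entryMoment μ Y i j + entryMoment μ Y j i := by
  have hphase (k : ℕ) : ‖Complex.I ^ k‖ = 1 := by rw [norm_pow, Complex.norm_I, one_pow]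
  have hmoment (k : ℕ) : entryMoment μ Y i i =
      ∫ U, ‖unitaryConj U Y i i + unitaryConj U Y j j + star (Complex.I ^ k) * unitaryConj U Y i j
        + Complex.I ^ k * unitaryConj U Y j i‖ ^ 2 / 4 ∂μ := by
    rw [entryMoment, ← integral_normSq_dotProduct_unitaryConj μ Y
      (sum_normSq_phaseVector hij (hphase k)) i]
    refine integral_congr_ae (.of_forall fun U => ?_)
    beta_reduce
    rw [phaseVector_dotProduct_mulVec _ i j (hphase k), norm_div, div_pow]
    norm_num
  calc 4 * entryMoment μ Y i i = ∑ _k ∈ Finset.range 4, entryMoment μ Y i i := by simp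
    _ = ∫ U, ‖unitaryConj U Y i i + unitaryConj U Y j j‖ ^ 2 + ‖unitaryConj U Y i j‖ ^ 2 +
          ‖unitaryConj U Y j i‖ ^ 2 ∂μ := by
      rw [Finset.sum_congr rfl fun k _ => hmoment k, ← integral_finsetSum _ fun k _ =>
        integrable_of_continuous_unitaryGroup μ (by fun_prop)]
      simp only [← Finset.sum_div, sum_normSq_add_phases,
        mul_div_cancel_left₀ _ (four_ne_zero (α := ℝ))]
    _ = _ := by
      rw [integral_add, integral_add]
      · rfl
      all_goals exact integrable_of_continuous_unitaryGroup μ (by fun_prop)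

theorem entryMoment_diag_eq_diagCorrelation_add [μ.IsMulLeftInvariant] (Y : Matrix n n ℂ)
    {i j : n} (hij : i ≠ j) :
    entryMoment μ Y i i = diagCorrelation μ Y i j + entryMoment μ Y i j := by
  have h := four_mul_entryMoment_diag μ Y hij
  rw [integral_normSq_diag_add_diag, entryMoment_diag_eq μ Y j i,
    entryMoment_offDiag_eq μ Y hij.symm hij] at h
  linarith

theorem sum_diagCorrelation_eq_zero {Y : Matrix n n ℂ} (hY : trace Y = 0) (i : n) :
    ∑ j, diagCorrelation μ Y i j = 0 := by
  have htrace (U : unitaryGroup n ℂ) : ∑ j, unitaryConj U Y j j = 0 :=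
    (trace_unitaryConj U Y).trans hY
  simp only [diagCorrelation]
  rw [← integral_finsetSum _ fun j _ => integrable_of_continuous_unitaryGroup μ (by fun_prop)]
  simp only [← inner_sum, htrace, inner_zero_right, integral_zero]

theorem diagCorrelation_nonpos [μ.IsMulLeftInvariant] {Y : Matrix n n ℂ} (hY : trace Y = 0)
    {i j : n} (hij : i ≠ j) : diagCorrelation μ Y i j ≤ 0 := by
  by_contra! hpos
  have hnonneg (k : n) : 0 ≤ diagCorrelation μ Y i k := by
    rcases eq_or_ne i k with rfl | hik
    · rw [diagCorrelation_self]
      exact entryMoment_nonneg μ Y i i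
    · have hi_j := entryMoment_diag_eq_diagCorrelation_add μ Y hij
      have hi_k := entryMoment_diag_eq_diagCorrelation_add μ Y hik
      rw [entryMoment_offDiag_eq μ Y hik hij] at hi_k
      linarith
  exact (Finset.sum_pos' (fun k _ => hnonneg k) ⟨j, Finset.mem_univ j, hpos⟩).ne'
    (sum_diagCorrelation_eq_zero μ hY i)

theorem entryMoment_diag_le_offDiag [μ.IsMulLeftInvariant] {Y : Matrix n n ℂ} (hY : trace Y = 0)
    (i : n) {j k : n} (hjk : j ≠ k) : entryMoment μ Y i i ≤ entryMoment μ Y j k := by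
  rw [entryMoment_diag_eq μ Y i j, entryMoment_diag_eq_diagCorrelation_add μ Y hjk]
  linarith [diagCorrelation_nonpos μ hY hjk]

theorem entryMoment_le_of_eq_imp_eq [μ.IsMulLeftInvariant] {Y : Matrix n n ℂ} (hY : trace Y = 0)
    {i j k l : n} (h : k = l → i = j) : entryMoment μ Y i j ≤ entryMoment μ Y k l := by
  rcases eq_or_ne k l with rfl | hkl
  · rw [h rfl]
    exact (entryMoment_diag_eq μ Y j k).le
  rcases eq_or_ne i j with rfl | hij
  · exact entryMoment_diag_le_offDiag μ hY i hkl
  · exact (entryMoment_offDiag_eq μ Y hij hkl).le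

theorem integral_frobSq_submatrix_unitaryConj {m : Type*} [Fintype m] (Y : Matrix n n ℂ)
    (f : m → n) :
    ∫ U, frobSq ((unitaryConj U Y).submatrix f f) ∂μ = ∑ k, ∑ l, entryMoment μ Y (f k) (f l) := by
  simp only [frobSq, submatrix_apply, entryMoment]
  rw [integral_finsetSum _ fun k _ => integrable_of_continuous_unitaryGroup μ (by fun_prop)]
  exact Finset.sum_congr rfl fun k _ => integral_finsetSum _ fun l _ =>
    integrable_of_continuous_unitaryGroup μ (by fun_prop)

theorem sum_entryMoment [IsProbabilityMeasure μ] (Y : Matrix n n ℂ) :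
    ∑ i, ∑ j, entryMoment μ Y i j = frobSq Y := by
  simpa only [submatrix_id_id, frobSq_unitaryConj, integral_const, probReal_univ, one_smul, id]
    using (integral_frobSq_submatrix_unitaryConj μ Y id).symm

end EntryMoments

section Compression

variable {p b : Type*} [Fintype p] [DecidableEq p] [Fintype b] [DecidableEq b]

/-- The compression `⟨x| ⊗ I_b` by the vector `x`. -/
def braTensorOne (b : Type*) [DecidableEq b] (x : p → ℂ) : Matrix b (p × b) ℂ :=
  (replicateRow Unit (star x) ⊗ₖ (1 : Matrix b b ℂ)).submatrix (Prod.mk ()) id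

theorem exists_unitary_compression_eq_submatrix {x : p → ℂ} (hx : ∑ i, ‖x i‖ ^ 2 = 1) (q : p) :
    ∃ G : unitaryGroup (p × b) ℂ, ∀ M : Matrix (p × b) (p × b) ℂ,
      braTensorOne b x * M * (braTensorOne b x)ᴴ =
        (unitaryConj G M).submatrix (Prod.mk q) (Prod.mk q) := by
  have hx' : ∑ i, ‖star x i‖ ^ 2 = 1 := by simpa only [Pi.star_apply, norm_star] using hx
  obtain ⟨g, hg⟩ := exists_unitary_row hx' q
  have hbra : braTensorOne b x =
      ((g : Matrix p p ℂ) ⊗ₖ (1 : Matrix b b ℂ)).submatrix (Prod.mk q) id := by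
    ext k ⟨r, l⟩
    exact congrArg (· * (1 : Matrix b b ℂ) k l) (congrFun hg r).symm
  refine ⟨⟨_, kronecker_mem_unitary g.2 (one_mem (unitary (Matrix b b ℂ)))⟩, fun M => ?_⟩
  rw [hbra]
  rfl

variable [MeasurableSpace (unitaryGroup (p × b) ℂ)] [BorelSpace (unitaryGroup (p × b) ℂ)]
  (μ : Measure (unitaryGroup (p × b) ℂ)) [μ.IsMulLeftInvariant] [IsProbabilityMeasure μ]

theorem integral_frobSq_compression (Y : Matrix (p × b) (p × b) ℂ) {x : p → ℂ}
    (hx : ∑ i, ‖x i‖ ^ 2 = 1) (q : p) :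
    ∫ U, frobSq (braTensorOne b x * unitaryConj U Y * (braTensorOne b x)ᴴ) ∂μ =
      ∑ k, ∑ l, entryMoment μ Y (q, k) (q, l) := by
  obtain ⟨G, hG⟩ := exists_unitary_compression_eq_submatrix (b := b) hx q
  simp only [hG]
  rw [integral_unitaryConj_unitaryConj μ G Y
    fun M => frobSq (M.submatrix (Prod.mk q) (Prod.mk q))]
  exact integral_frobSq_submatrix_unitaryConj μ Y (Prod.mk q)

theorem sq_card_mul_integral_frobSq_compression_le {Y : Matrix (p × b) (p × b) ℂ}
    (hY : trace Y = 0) {x : p → ℂ} (hx : ∑ i, ‖x i‖ ^ 2 = 1) :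
    (Fintype.card p : ℝ) ^ 2 *
      ∫ U, frobSq (braTensorOne b x * unitaryConj U Y * (braTensorOne b x)ᴴ) ∂μ ≤ frobSq Y := by
  obtain ⟨q⟩ : Nonempty p := by
    by_contra! h
    exact zero_ne_one (Fintype.sum_empty _ |>.symm.trans hx)
  calc _ = ∑ _r : p, ∑ k, ∑ _s : p, ∑ l, entryMoment μ Y (q, k) (q, l) := by
        rw [integral_frobSq_compression μ Y hx q]
        simp only [Finset.sum_const, Finset.card_univ, nsmul_eq_mul, ← Finset.mul_sum]
        ring
    _ ≤ ∑ r, ∑ k, ∑ s, ∑ l, entryMoment μ Y (r, k) (s, l) := by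
        gcongr with r _ k _ s _ l _
        refine entryMoment_le_of_eq_imp_eq μ hY fun h => ?_
        rw [(Prod.mk.inj h).2]
    _ = frobSq Y := by
        rw [← sum_entryMoment μ Y]
        simp only [Fintype.sum_prod_type]

end Compression

section PartialTrace

variable {a b c : Type*} [Fintype b]

theorem ptraceRight_outer (v : a × b → ℂ) :
    ptraceRight (outer v) = of (Function.curry v) * (of (Function.curry v))ᴴ :=
  rfl

theorem posSemidef_ptraceRight_outer [Finite a] (v : a × b → ℂ) :
    (ptraceRight (outer v)).PosSemidef := by
  rw [ptraceRight_outer]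
  exact posSemidef_self_mul_conjTranspose _

theorem ptraceRight_outer_kronecker_one_mulVec [Fintype a] [DecidableEq b] (A : Matrix c a ℂ)
    (v : a × b → ℂ) :
    ptraceRight (outer ((A ⊗ₖ (1 : Matrix b b ℂ)) *ᵥ v)) = A * ptraceRight (outer v) * Aᴴ := by
  have h : of (Function.curry ((A ⊗ₖ (1 : Matrix b b ℂ)) *ᵥ v)) = A * of (Function.curry v) := by
    ext i k
    simp [mulVec, dotProduct, mul_apply, Fintype.sum_prod_type, one_apply]
  rw [ptraceRight_outer, ptraceRight_outer, h, conjTranspose_mul]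
  simp only [Matrix.mul_assoc]

end PartialTrace

section Decoupling

variable {a p b : Type*} [Fintype a] [Fintype p] [DecidableEq p] [Fintype b] [DecidableEq b]

/-- The post-measurement encoding map `√d_p (⟨x| ⊗ I) U S`, where an arbitrary isometry `S` takes
the place of adjoining the ancilla state. -/
noncomputable def measuredEncoding (S : Matrix (p × b) a ℂ) (x : p → ℂ)
    (U : Matrix (p × b) (p × b) ℂ) : Matrix b a ℂ :=
  ((√(Fintype.card p) : ℝ) : ℂ) • (braTensorOne b x * U * S)

theorem frobSq_measuredEncoding_conj (S : Matrix (p × b) a ℂ) (x : p → ℂ)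
    (U : unitaryGroup (p × b) ℂ) (X : Matrix a a ℂ) :
    frobSq (measuredEncoding S x U * X * (measuredEncoding S x U)ᴴ) =
      (Fintype.card p : ℝ) ^ 2 *
        frobSq (braTensorOne b x * unitaryConj U (S * X * Sᴴ) * (braTensorOne b x)ᴴ) := by
  have hscale : ((√(Fintype.card p) : ℝ) : ℂ) * star ((√(Fintype.card p) : ℝ) : ℂ) =
      Fintype.card p := by
    rw [Complex.star_def, Complex.conj_ofReal, ← Complex.ofReal_mul,
      Real.mul_self_sqrt (Nat.cast_nonneg _), Complex.ofReal_natCast]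
  have h : measuredEncoding S x U * X * (measuredEncoding S x U)ᴴ = (Fintype.card p : ℂ) •
      (braTensorOne b x * unitaryConj U (S * X * Sᴴ) * (braTensorOne b x)ᴴ) := by
    rw [← hscale, mul_comm]
    simp only [measuredEncoding, unitaryConj, conjTranspose_smul, conjTranspose_mul,
      Matrix.smul_mul, Matrix.mul_smul, smul_smul, Matrix.mul_assoc]
  rw [h, frobSq_smul, Complex.norm_natCast]

variable [DecidableEq a] [MeasurableSpace (unitaryGroup (p × b) ℂ)]
  [BorelSpace (unitaryGroup (p × b) ℂ)] (μ : Measure (unitaryGroup (p × b) ℂ))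
  [μ.IsMulLeftInvariant] [IsProbabilityMeasure μ]

theorem integral_frobSq_measuredEncoding_conj_le {S : Matrix (p × b) a ℂ} (hS : Sᴴ * S = 1)
    {x : p → ℂ} (hx : ∑ i, ‖x i‖ ^ 2 = 1) {X : Matrix a a ℂ} (hX : trace X = 0) :
    ∫ U : unitaryGroup (p × b) ℂ,
      frobSq (measuredEncoding S x U * X * (measuredEncoding S x U)ᴴ) ∂μ ≤ frobSq X := by
  have hY : trace (S * X * Sᴴ) = 0 := (trace_isometry_conj hS X).trans hX
  simp only [frobSq_measuredEncoding_conj, integral_const_mul]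
  exact (sq_card_mul_integral_frobSq_compression_le μ hY hx).trans_eq (frobSq_isometry_conj hS X)

theorem haar_decoupling_bound_R_general {r : Type*} [Fintype r] [DecidableEq r]
    {S : Matrix (p × b) a ℂ} (hS : Sᴴ * S = 1) {x : p → ℂ} (hx : ∑ i, ‖x i‖ ^ 2 = 1)
    (v : a × r → ℂ) {W : Matrix a a ℂ} (hW : W ∈ unitaryGroup a ℂ) :
    ∫ U : unitaryGroup (p × b) ℂ,
      frobSq
        (ptraceRight (outer (((measuredEncoding S x U * W) ⊗ₖ (1 : Matrix r r ℂ)) *ᵥ v)) -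
          ptraceRight (outer ((measuredEncoding S x U ⊗ₖ (1 : Matrix r r ℂ)) *ᵥ v))) ∂μ ≤
      2 * (trace (ptraceRight (outer v) * ptraceRight (outer v))).re := by
  set ρ := ptraceRight (outer v)
  have hρ : ρ.PosSemidef := posSemidef_ptraceRight_outer v
  have hW' : Wᴴ * W = 1 := mem_unitaryGroup_iff'.1 hW
  have htrace : trace (W * ρ * Wᴴ - ρ) = 0 := by
    rw [trace_sub, trace_isometry_conj hW', sub_self]
  have hintegrand (V : Matrix b a ℂ) :
      ptraceRight (outer (((V * W) ⊗ₖ (1 : Matrix r r ℂ)) *ᵥ v)) -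
        ptraceRight (outer ((V ⊗ₖ (1 : Matrix r r ℂ)) *ᵥ v)) = V * (W * ρ * Wᴴ - ρ) * Vᴴ := by
    simp only [ptraceRight_outer_kronecker_one_mulVec, conjTranspose_mul, Matrix.mul_sub,
      Matrix.sub_mul, Matrix.mul_assoc, ρ]
  calc _ ≤ frobSq (W * ρ * Wᴴ - ρ) := by
        simpa only [hintegrand] using integral_frobSq_measuredEncoding_conj_le μ hS hx htrace
    _ ≤ frobSq (W * ρ * Wᴴ) + frobSq ρ :=
        frobSq_sub_le_of_posSemidef (hρ.mul_mul_conjTranspose_same W) hρ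
    _ = 2 * (trace (ρ * ρ)).re := by
        rw [frobSq_isometry_conj hW', frobSq_eq_re_trace, hρ.isHermitian.eq, two_mul]

end Decoupling

section Ancilla

variable {a f n : Type*} [DecidableEq a]

/-- The map `v ↦ v ⊗ φ`, read through an identification of the product index set. -/
def tensorKet (e : a × f ≃ n) (φ : f → ℂ) : Matrix n a ℂ :=
  ((1 : Matrix a a ℂ) ⊗ₖ replicateCol Unit φ).submatrix e.symm fun i => (i, ())

theorem tensorKet_conjTranspose_mul_self [Finite a] [Fintype f] [Fintype n] (e : a × f ≃ n)
    {φ : f → ℂ} (hφ : ∑ i, ‖φ i‖ ^ 2 = 1) : (tensorKet e φ)ᴴ * tensorKet e φ = 1 := by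
  cases nonempty_fintype a
  have hφ' : (replicateCol Unit φ)ᴴ * replicateCol Unit φ = 1 := by
    ext
    simp only [mul_apply, conjTranspose_apply, replicateCol_apply, one_apply_eq, Complex.star_def,
      Complex.conj_mul', ← Complex.ofReal_pow, ← Complex.ofReal_sum, hφ, Complex.ofReal_one]
  rw [tensorKet, conjTranspose_submatrix, submatrix_mul_equiv, conjTranspose_kronecker,
    ← mul_kronecker_mul, hφ', conjTranspose_one, Matrix.one_mul, one_kronecker_one,
    submatrix_one _ fun _ _ h => (Prod.mk.inj h).1]

theorem Vtilde_eq_measuredEncoding (dR df dP dB : ℕ) (e : Fin dR × Fin df ≃ Fin dP × Fin dB)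
    (ψf : Fin df → ℂ) (eP : Fin dP → ℂ) (U : Matrix (Fin dP × Fin dB) (Fin dP × Fin dB) ℂ) :
    Vtilde dR df dP dB e ψf eP U = measuredEncoding (tensorKet e ψf) eP U := by
  ext k r
  rw [measuredEncoding, Matrix.mul_assoc, Matrix.smul_apply, mul_apply, Fintype.sum_prod_type]
  simp [Vtilde, braTensorOne, tensorKet, mul_apply, one_apply]

end Ancilla

/-- **Haar-averaged decoupling bound from the reference (equation (5.21)).**
For a Haar-random unitary `U : H_b ⊗ H_f → H_P ⊗ H_B` followed by a projective
measurement `⟨e_P|` on `H_P`, the average squared Frobenius norm of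
`Tr_R[Ṽ_U W_b ψψ† W_b† Ṽ_U†] − Tr_R[Ṽ_U ψψ† Ṽ_U†]` is at most
`4·Tr[(Tr_R(ψψ†))²] = 4·e^{−S₂(b)_ψ}`. -/
theorem haar_decoupling_bound_R
    (dR df dP dB : ℕ) (hdR : 0 < dR) (hdf : 0 < df) (hdP : 0 < dP) (hdB : 0 < dB)
    (hdim : dR * df = dP * dB)
    (e : Fin dR × Fin df ≃ Fin dP × Fin dB)
    (ψf : Fin df → ℂ) (hψf : ∑ i, ‖ψf i‖ ^ 2 = 1)
    (eP : Fin dP → ℂ) (heP : ∑ i, ‖eP i‖ ^ 2 = 1)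
    (ψ : Fin dR × Fin dR → ℂ) (hψ : ∑ i, ‖ψ i‖ ^ 2 = 1)
    (Wb : Matrix (Fin dR) (Fin dR) ℂ) (hWb : Wb ∈ Matrix.unitaryGroup (Fin dR) ℂ)
    [MeasurableSpace (Matrix.unitaryGroup (Fin dP × Fin dB) ℂ)]
    [BorelSpace (Matrix.unitaryGroup (Fin dP × Fin dB) ℂ)]
    (μ : Measure (Matrix.unitaryGroup (Fin dP × Fin dB) ℂ))
    [μ.IsHaarMeasure] [IsProbabilityMeasure μ] :
    (∫ U : Matrix.unitaryGroup (Fin dP × Fin dB) ℂ,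
      frobSq
        (ptraceRight (outer
            ((((Vtilde dR df dP dB e ψf eP U * Wb) ⊗ₖ (1 : Matrix (Fin dR) (Fin dR) ℂ)).mulVec ψ)))
          - ptraceRight (outer
            ((((Vtilde dR df dP dB e ψf eP U) ⊗ₖ (1 : Matrix (Fin dR) (Fin dR) ℂ)).mulVec ψ)))) ∂μ)
      ≤ 4 * (Matrix.trace (ptraceRight (outer ψ) * ptraceRight (outer ψ))).re := by
  have hbound :=
    haar_decoupling_bound_R_general μ (tensorKet_conjTranspose_mul_self e hψf) heP ψ hWb
  have hpurity := re_trace_mul_nonneg_of_posSemidef (posSemidef_ptraceRight_outer ψ)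
    (posSemidef_ptraceRight_outer ψ)
  simp only [Vtilde_eq_measuredEncoding]
  linarith
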